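/- arXiv:2210.11523 — 3 statements merged into one kernel-verified Lean document; each statement's English description precedes it below -/
import Mathlib

section
/- Let m, n ∈ ℕ and let ξ₁,…,ξ_m ∈ ℝ and α₁,…,α_m ∈ ℝ. The following are equivalent: (1) for every family of coefficients c : {−n,…,n} → ℂ, the function f(θ) = Σ_{k=−n}^{n} c_k e^{ikθ} satisfies f′(θ) = Σ_{j=1}^{m} ξ_j · (f(θ + α_j) − f(θ − α_j)) for all θ ∈ ℝ; (2) for every k ∈ {1, …, n}, Σ_{j=1}^{m} ξ_j · sin(kα_j) = k/2. -/
open Complex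

/-!
Both differentiation and a symmetric shift rule act diagonally on the exponentials `exp (I ω z)`:
the former multiplies by `I ω`, the latter by `2 I ∑ ξ_j sin (ω α_j)`. As the coefficients are
arbitrary, the rule is exact if and only if these multipliers agree at every frequency. For integer
frequencies both multipliers are odd in `ω`, so only the positive frequencies matter.
-/

section ExpSum

variable {κ ι : Type*} {S : Finset κ}

/-- The exponential sum `z ↦ ∑ k ∈ S, c k * exp (I * ω k * z)`. Trigonometric polynomials are the
case of integer frequencies `ω`; here `ω` may be complex and need not be injective, and the sum is
regarded as an entire function so that it can be evaluated at complex shifts. -/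
noncomputable def expSum (S : Finset κ) (ω c : κ → ℂ) (z : ℂ) : ℂ :=
  ∑ k ∈ S, c k * exp (I * ω k * z)

theorem hasDerivAt_expSum (S : Finset κ) (ω c : κ → ℂ) (z : ℂ) :
    HasDerivAt (expSum S ω c) (expSum S ω (fun k => c k * (I * ω k)) z) z := by
  refine HasDerivAt.fun_sum fun k _ => ?_
  exact ((hasDerivAt_const_mul (I * ω k)).cexp.const_mul (c k)).congr_deriv (by ring)

theorem hasDerivAt_expSum_ofReal_iff {ω c : κ → ℂ} {θ : ℝ} {d : ℂ} :
    HasDerivAt (fun t : ℝ => expSum S ω c t) d θ ↔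
      d = expSum S ω (fun k => c k * (I * ω k)) θ := by
  have hasDerivAt_ofReal := (hasDerivAt_expSum S ω c θ).comp_ofReal
  exact ⟨fun h => h.unique hasDerivAt_ofReal, fun h => h ▸ hasDerivAt_ofReal⟩

theorem exp_I_mul_add_sub_exp_I_mul_sub (w z a : ℂ) :
    exp (I * w * (z + a)) - exp (I * w * (z - a)) = 2 * I * sin (w * a) * exp (I * w * z) := by
  have exp_add_shift : exp (I * w * (z + a)) = exp (I * w * z) * exp (w * a * I) := by
    rw [← exp_add]; ring_nf
  have exp_sub_shift : exp (I * w * (z - a)) = exp (I * w * z) * exp (-(w * a) * I) := by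
    rw [← exp_add]; ring_nf
  rw [exp_add_shift, exp_sub_shift, exp_mul_I, exp_mul_I, cos_neg, sin_neg]
  ring

theorem sum_mul_expSum_add_sub_expSum_sub [Fintype ι] (S : Finset κ) (ω c : κ → ℂ)
    (ξ α : ι → ℂ) (z : ℂ) :
    ∑ j, ξ j * (expSum S ω c (z + α j) - expSum S ω c (z - α j)) =
      expSum S ω (fun k => c k * (2 * I * ∑ j, ξ j * sin (ω k * α j))) z := by
  simp_rw [expSum, ← Finset.sum_sub_distrib, ← mul_sub, exp_I_mul_add_sub_exp_I_mul_sub,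
    Finset.mul_sum, Finset.sum_mul]
  rw [Finset.sum_comm]
  refine Finset.sum_congr rfl fun k _ => Finset.sum_congr rfl fun j _ => ?_
  ring

theorem expSum_single_mul [DecidableEq κ] {k : κ} (hk : k ∈ S) (ω a : κ → ℂ) (z : ℂ) :
    expSum S ω (fun l => Pi.single (M := fun _ => ℂ) k 1 l * a l) z =
      a k * exp (I * ω k * z) := by
  simp [expSum, Pi.single_apply, hk]

theorem forall_expSum_mul_eq_iff {ω a b : κ → ℂ} (z : ℂ) :
    (∀ c : κ → ℂ, expSum S ω (fun k => c k * a k) z = expSum S ω (fun k => c k * b k) z) ↔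
      ∀ k ∈ S, a k = b k := by
  classical
  constructor
  · intro h k hk
    have at_single := h (Pi.single k 1)
    rw [expSum_single_mul hk, expSum_single_mul hk] at at_single
    exact mul_right_cancel₀ (exp_ne_zero _) at_single
  · intro h c
    exact Finset.sum_congr rfl fun k hk => by simp only [h k hk]

theorem symmetric_shift_rule_characterisation_general [Fintype ι] (S : Finset κ) (ω : κ → ℂ)
    (ξ α : ι → ℂ) :
    (∀ c : κ → ℂ, ∀ θ : ℝ,
      HasDerivAt (fun t : ℝ => expSum S ω c t)
        (∑ j, ξ j * (expSum S ω c (θ + α j) - expSum S ω c (θ - α j))) θ) ↔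
      ∀ k ∈ S, ∑ j, ξ j * sin (ω k * α j) = ω k / 2 := by
  have multiplier_eq_iff (k : κ) :
      2 * I * ∑ j, ξ j * sin (ω k * α j) = I * ω k ↔ ∑ j, ξ j * sin (ω k * α j) = ω k / 2 := by
    rw [mul_comm 2 I, mul_assoc, mul_right_inj' I_ne_zero, eq_div_iff two_ne_zero, mul_comm]
  simp_rw [hasDerivAt_expSum_ofReal_iff, sum_mul_expSum_add_sub_expSum_sub, ← multiplier_eq_iff]
  rw [forall_comm]
  simp_rw [forall_expSum_mul_eq_iff, forall_const]

end ExpSum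

theorem forall_mem_Icc_neg_iff_of_neg {P : ℤ → Prop} (zero : P 0) (neg : ∀ k, P k → P (-k))
    (n : ℕ) :
    (∀ k ∈ Finset.Icc (-(n : ℤ)) n, P k) ↔ ∀ k ∈ Finset.Icc 1 n, P (k : ℕ) := by
  simp only [Finset.mem_Icc]
  refine ⟨fun h k hk => h k (by lia), fun h k hk => ?_⟩
  have natCast_of_le (a : ℕ) (ha : a ≤ n) : P a := by
    rcases a.eq_zero_or_pos with rfl | pos
    · exact zero
    · exact h a ⟨pos, ha⟩
  obtain ⟨a, rfl | rfl⟩ := k.eq_nat_or_neg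
  · exact natCast_of_le a (by lia)
  · exact neg a (natCast_of_le a (by lia))

theorem forall_Icc_neg_sum_mul_sin_eq_iff {ι : Type*} [Fintype ι] (n : ℕ) (ξ α : ι → ℂ) :
    (∀ k ∈ Finset.Icc (-(n : ℤ)) n, ∑ j, ξ j * sin (k * α j) = (k : ℂ) / 2) ↔
      ∀ k ∈ Finset.Icc 1 n, ∑ j, ξ j * sin (k * α j) = (k : ℂ) / 2 := by
  refine (forall_mem_Icc_neg_iff_of_neg (by simp) (fun k hk => ?_) n).trans (by simp)
  simp [neg_div, hk]

/-- Characterisation of all symmetric (±α) `m`-term parameter-shift rules for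
trigonometric polynomials of degree at most `n`. -/
theorem symmetric_shift_rule_characterisation (m n : ℕ) (ξ α : Fin m → ℝ) :
    (∀ c : ℤ → ℂ, ∀ θ : ℝ,
      HasDerivAt
        (fun θ : ℝ => ∑ k ∈ Finset.Icc (-(n : ℤ)) (n : ℤ), c k * Complex.exp (I * k * θ))
        (∑ j, (ξ j : ℂ) *
          ((∑ k ∈ Finset.Icc (-(n : ℤ)) (n : ℤ), c k * Complex.exp (I * k * (θ + α j))) -
           (∑ k ∈ Finset.Icc (-(n : ℤ)) (n : ℤ), c k * Complex.exp (I * k * (θ - α j))))) θ)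
    ↔ (∀ k ∈ Finset.Icc 1 n, ∑ j, ξ j * Real.sin (k * α j) = (k : ℝ) / 2) := by
  refine (symmetric_shift_rule_characterisation_general _ (fun k : ℤ => (k : ℂ)) _ _).trans <|
    (forall_Icc_neg_sum_mul_sin_eq_iff n _ _).trans ?_
  exact forall₂_congr fun k _ => by rw [← ofReal_inj]; push_cast; rfl
end

section
/- Define sequences a, b : ℕ → ℝ by a(0) = 1/2, b(0) = 0, a(l+1) = (3·a(l) − b(l))/4, and b(l+1) = (b(l) − a(l))/2. Then for every l ≥ 1, (a(l−1) − b(l−1))/2 = (4^l − 1)/(3·4^l). -/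
/-!
The recurrence `(a, b) ↦ ((3a - b) / 4, (b - a) / 2)` is linear, and its matrix has the left
eigenvectors `(2, -1)` and `(1, 1)`, with eigenvalues `1` and `1 / 4`. Hence `2a - b` is conserved,
`a + b` decays like `4⁻ˡ`, and `3 (a - b) = 2 (2a - b) - (a + b)` gives the difference.
-/

section Recurrence

variable {K : Type*} [Field K] {a b : ℕ → K}

theorem two_mul_sub_eq_of_recurrence (h2 : (2 : K) ≠ 0)
    (ha : ∀ l, a (l + 1) = (3 * a l - b l) / 4) (hb : ∀ l, b (l + 1) = (b l - a l) / 2) (l : ℕ) :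
    2 * a l - b l = 2 * a 0 - b 0 := by
  induction l with
  | zero => rfl
  | succ l ih =>
    have h4 : (4 : K) = 2 * 2 := by norm_num
    calc 2 * a (l + 1) - b (l + 1) = 2 * a l - b l := by rw [ha, hb, h4]; field_simp; ring
      _ = 2 * a 0 - b 0 := ih

theorem add_eq_div_four_pow_of_recurrence (h2 : (2 : K) ≠ 0)
    (ha : ∀ l, a (l + 1) = (3 * a l - b l) / 4) (hb : ∀ l, b (l + 1) = (b l - a l) / 2) (l : ℕ) :
    a l + b l = (a 0 + b 0) / 4 ^ l := by
  induction l with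
  | zero => simp
  | succ l ih =>
    have h4 : (4 : K) = 2 * 2 := by norm_num
    calc a (l + 1) + b (l + 1) = (a l + b l) / 4 := by rw [ha, hb, h4]; field_simp; ring
      _ = (a 0 + b 0) / 4 ^ (l + 1) := by rw [ih, div_div, pow_succ]

theorem iqp1_even_layer_closed_form_general (h2 : (2 : K) ≠ 0) (h3 : (3 : K) ≠ 0)
    (ha : ∀ l, a (l + 1) = (3 * a l - b l) / 4) (hb : ∀ l, b (l + 1) = (b l - a l) / 2) (l : ℕ) :
    (a l - b l) / 2 = (2 * (2 * a 0 - b 0) - (a 0 + b 0) / 4 ^ l) / (3 * 2) := by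
  rw [← two_mul_sub_eq_of_recurrence h2 ha hb l, ← add_eq_div_four_pow_of_recurrence h2 ha hb l]
  field_simp
  ring

end Recurrence

/-- Closed form for the even-layer gradient variance of the IQP₁ ansatz. -/
theorem iqp1_even_layer_closed_form (a b : ℕ → ℝ)
    (ha0 : a 0 = 1 / 2) (hb0 : b 0 = 0)
    (ha : ∀ l, a (l + 1) = (3 * a l - b l) / 4)
    (hb : ∀ l, b (l + 1) = (b l - a l) / 2) :
    ∀ l : ℕ, 1 ≤ l → (a (l - 1) - b (l - 1)) / 2 = (4 ^ l - 1) / (3 * 4 ^ l) := by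
  intro l hl
  obtain ⟨k, rfl⟩ := Nat.exists_eq_add_of_le' hl
  rw [Nat.add_sub_cancel, iqp1_even_layer_closed_form_general two_ne_zero three_ne_zero ha hb,
    ha0, hb0, pow_succ]
  field_simp
  ring
end

section
/- Define sequences a, b : ℕ → ℝ by a(0) = 1/2, b(0) = 0, a(l+1) = (3·a(l) − b(l))/4, and b(l+1) = (b(l) − a(l))/2. Then a(l) converges to 1/3 and b(l) converges to −1/3 as l → ∞. In particular, the gradient variance of the IQP₁ ansatz is, in absolute value, bounded below by a positive constant independent of the number of layers, so no barren plateau appears. -/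
open Filter

/-!
The transition matrix of the recurrence has eigenvalues `1` and `1 / 4`, with left eigenvectors
`(2, -1)` and `(1, 1)`. Hence `2 a - b` is conserved while `a + b` decays geometrically, and
`a = ((2 a - b) + (a + b)) / 3` and `b = (2 (a + b) - (2 a - b)) / 3` converge.
-/

section GeometricSequence

theorem eq_pow_mul_of_succ_eq_mul {M : Type*} [Monoid M] {u : ℕ → M} {r : M}
    (hu : ∀ n, u (n + 1) = r * u n) (n : ℕ) : u n = r ^ n * u 0 := by
  induction n with
  | zero => rw [pow_zero, one_mul]
  | succ n ih => rw [hu, ih, pow_succ', mul_assoc]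

theorem tendsto_zero_of_succ_eq_mul {R : Type*} [SeminormedRing R] {u : ℕ → R} {r : R}
    (hr : ‖r‖ < 1) (hu : ∀ n, u (n + 1) = r * u n) : Tendsto u atTop (nhds 0) := by
  rw [funext (eq_pow_mul_of_succ_eq_mul hu)]
  simpa only [zero_mul] using (tendsto_pow_atTop_nhds_zero_of_norm_lt_one hr).mul_const (u 0)

end GeometricSequence

section Recurrence

variable {K : Type*} [Field K] [NeZero (2 : K)] {a b : ℕ → K}

theorem iqp1_add_succ (ha : ∀ l, a (l + 1) = (3 * a l - b l) / 4)
    (hb : ∀ l, b (l + 1) = (b l - a l) / 2) (l : ℕ) :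
    a (l + 1) + b (l + 1) = 4⁻¹ * (a l + b l) := by
  have four_eq : (4 : K) = 2 * 2 := by norm_num
  rw [ha, hb, four_eq]
  field_simp
  ring

theorem iqp1_two_mul_sub_eq (ha : ∀ l, a (l + 1) = (3 * a l - b l) / 4)
    (hb : ∀ l, b (l + 1) = (b l - a l) / 2) (l : ℕ) :
    2 * a l - b l = 2 * a 0 - b 0 := by
  induction l with
  | zero => rfl
  | succ l ih =>
    have four_eq : (4 : K) = 2 * 2 := by norm_num
    rw [← ih, ha, hb, four_eq]
    field_simp
    ring

end Recurrence

theorem iqp1_variance_converges_general {𝕜 : Type*} [RCLike 𝕜] {a b : ℕ → 𝕜}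
    (ha : ∀ l, a (l + 1) = (3 * a l - b l) / 4)
    (hb : ∀ l, b (l + 1) = (b l - a l) / 2) :
    Tendsto a atTop (nhds ((2 * a 0 - b 0) / 3)) ∧
      Tendsto b atTop (nhds (-((2 * a 0 - b 0) / 3))) := by
  have norm_ratio_lt : ‖(4⁻¹ : 𝕜)‖ < 1 := by
    rw [norm_inv, RCLike.norm_ofNat]
    norm_num
  have sum_tendsto : Tendsto (fun l => a l + b l) atTop (nhds 0) :=
    tendsto_zero_of_succ_eq_mul norm_ratio_lt (iqp1_add_succ ha hb)
  have a_eq (l : ℕ) : a l = ((2 * a 0 - b 0) + (a l + b l)) / 3 := by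
    rw [← iqp1_two_mul_sub_eq ha hb l]
    ring
  have b_eq (l : ℕ) : b l = (2 * (a l + b l) - (2 * a 0 - b 0)) / 3 := by
    rw [← iqp1_two_mul_sub_eq ha hb l]
    ring
  constructor
  · refine Tendsto.congr (fun l => (a_eq l).symm) ?_
    simpa only [add_zero] using (sum_tendsto.const_add (2 * a 0 - b 0)).div_const 3
  · refine Tendsto.congr (fun l => (b_eq l).symm) ?_
    simpa only [mul_zero, zero_sub, neg_div] using
      ((sum_tendsto.const_mul 2).sub_const (2 * a 0 - b 0)).div_const 3

/-- The gradient-variance sequences of the IQP₁ ansatz converge to ±1/3;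
in particular no barren plateau appears. -/
theorem iqp1_variance_converges (a b : ℕ → ℝ)
    (ha0 : a 0 = 1 / 2) (hb0 : b 0 = 0)
    (ha : ∀ l, a (l + 1) = (3 * a l - b l) / 4)
    (hb : ∀ l, b (l + 1) = (b l - a l) / 2) :
    Tendsto a atTop (nhds (1 / 3)) ∧ Tendsto b atTop (nhds (-(1 / 3))) := by
  have conserved_value : 2 * a 0 - b 0 = 1 := by norm_num [ha0, hb0]
  simpa only [conserved_value] using iqp1_variance_converges_general ha hb
end
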